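/- Fix an integer r ≥ 1. Then R̃_3(rK_2; 4r − 2) ≤ 5r − 4. Equivalently: Builder has a strategy that, playing on K_{4r−2} with 3 colors, guarantees within 5r − 4 moves that some color class contains r pairwise disjoint edges, against every Painter strategy. -/

import Mathlib

open Finset

/-- Two edges of a complete graph (elements of `Sym2 (Fin n)`) are disjoint if they
share no vertex. -/
def EdgeDisjoint {n : ℕ} (e f : Sym2 (Fin n)) : Prop := ∀ v, v ∈ e → v ∉ f

/-- A finite set of elements of `Sym2 (Fin n)` is a matching if each element is a genuine
(non-loop) edge and the edges are pairwise disjoint. -/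
def IsMatchingIn {n : ℕ} (M : Finset (Sym2 (Fin n))) : Prop :=
  (∀ e ∈ M, ¬ e.IsDiag) ∧ (M : Set (Sym2 (Fin n))).Pairwise EdgeDisjoint

/-- A history of the online Ramsey game on `K_n` with `t` colours: the list of
edges played so far, each together with the colour Painter gave it. -/
abbrev GameHistory (n t : ℕ) := List (Sym2 (Fin n) × Fin t)

/-- A Builder strategy: given the history so far, select the next edge. -/
abbrev BuilderStrategy (n t : ℕ) := GameHistory n t → Sym2 (Fin n)

/-- A Painter strategy: given the history so far and the newly selected edge,
choose a colour for it. -/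
abbrev PainterStrategy (n t : ℕ) := GameHistory n t → Sym2 (Fin n) → Fin t

/-- The history after `k` moves when Builder plays strategy `B` against Painter
strategy `P`. -/
def gamePlay {n t : ℕ} (B : BuilderStrategy n t) (P : PainterStrategy n t) :
    ℕ → GameHistory n t
  | 0 => []
  | k + 1 =>
      let h := gamePlay B P k
      h ++ [(B h, P h (B h))]

/-- Builder plays legally for the first `k` moves against `P`: every selected edge
is a genuine (non-loop) edge not selected before. -/
def BuilderValid {n t : ℕ} (B : BuilderStrategy n t) (P : PainterStrategy n t)
    (k : ℕ) : Prop :=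
  ∀ j < k, ¬ (B (gamePlay B P j)).IsDiag ∧
    B (gamePlay B P j) ∉ (gamePlay B P j).map Prod.fst

/-- The history `h` contains, for some colour `i`, a matching of `r i` edges all
coloured `i`. -/
def HistoryHasMatching (n t : ℕ) (r : Fin t → ℕ) (h : GameHistory n t) : Prop :=
  ∃ i : Fin t, ∃ M : Finset (Sym2 (Fin n)),
    M.card = r i ∧ IsMatchingIn M ∧ ∀ e ∈ M, (e, i) ∈ h

/-- Builder can force, within `k` legal moves on `K_n` with `t` colours, some colour
`i` to contain a matching of `r i` edges, against every Painter strategy. -/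
def BuilderWinsIn (n t : ℕ) (r : Fin t → ℕ) (k : ℕ) : Prop :=
  ∃ B : BuilderStrategy n t, (∀ P : PainterStrategy n t, BuilderValid B P k) ∧
    ∀ P : PainterStrategy n t, HistoryHasMatching n t r (gamePlay B P k)

/-- The restricted online Ramsey number `R̃(r₁K₂,…,r_tK₂; n)`: the least `k` such
that Builder can force a win within `k` moves. -/
noncomputable def restrictedOnlineRamsey (n t : ℕ) (r : Fin t → ℕ) : ℕ :=
  sInf {k | BuilderWinsIn n t r k}

/-- A colouring `c` of (the edges of) `K_N` with `t` colours contains, for some colour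
`i`, a matching of `r i` edges all coloured `i`. -/
def ColoringHasMatching (N t : ℕ) (r : Fin t → ℕ) (c : Sym2 (Fin N) → Fin t) : Prop :=
  ∃ i : Fin t, ∃ M : Finset (Sym2 (Fin N)),
    M.card = r i ∧ IsMatchingIn M ∧ ∀ e ∈ M, c e = i

/-- The classical Ramsey number `R(r₁K₂,…,r_tK₂)`: the least `N` such that every
`t`-colouring of the edges of `K_N` contains, for some `i`, a matching of `r i`
edges in colour `i`. -/
noncomputable def matchingRamsey (t : ℕ) (r : Fin t → ℕ) : ℕ :=
  sInf {N | ∀ c : Sym2 (Fin N) → Fin t, ColoringHasMatching N t r c}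

/-!
Call a set of `4s - 2` vertices active if every colour already has `r - s` disjoint edges avoiding
it and the edges played inside it form a matching. Builder first joins pairs of uncovered active
vertices. If the matching reaches size `2s - 1` with no colour class of size `s`, then each of the
three colours occurs in it. At most two further moves, joining edges of different colours, then
give four active vertices that span an edge of every colour and meet at most three matching edges.
Discarding them lowers `s` by one; the two moves and the three lost edges account for
`5 = 5s - 5(s - 1)` in the bound.
-/

section Game

variable {n t : ℕ} {r : Fin t → ℕ} {m : ℕ} {h : GameHistory n t}

/-- `e` is an edge which Builder may select after the history `h`. -/
def IsLegalMove (h : GameHistory n t) (e : Sym2 (Fin n)) : Prop :=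
  ¬ e.IsDiag ∧ e ∉ h.map Prod.fst

/-- Builder can force a win within `m` further legal moves from the history `h`. In contrast to
`BuilderWinsIn`, Builder may stop as soon as he has won. -/
inductive ForcesWin (r : Fin t → ℕ) : ℕ → GameHistory n t → Prop
  | done {m : ℕ} {h : GameHistory n t} (hh : HistoryHasMatching n t r h) : ForcesWin r m h
  | move {m : ℕ} {h : GameHistory n t} (e : Sym2 (Fin n)) (he : IsLegalMove h e)
      (hwin : ∀ c, ForcesWin r m (h ++ [(e, c)])) : ForcesWin r (m + 1) h

lemma HistoryHasMatching.append (hh : HistoryHasMatching n t r h) (l : GameHistory n t) :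
    HistoryHasMatching n t r (h ++ l) := by
  obtain ⟨i, M, hcard, hM, hmem⟩ := hh
  exact ⟨i, M, hcard, hM, fun e he => List.mem_append_left _ (hmem e he)⟩

lemma ForcesWin.historyHasMatching (hw : ForcesWin r 0 h) : HistoryHasMatching n t r h := by
  cases hw with
  | done hh => exact hh

lemma exists_isLegalMove (hl : h.length < n.choose 2) : ∃ e, IsLegalMove h e := by
  have hcard : #((h.map Prod.fst).toFinset) < #{e : Sym2 (Fin n) | ¬ e.IsDiag} := by
    calc #((h.map Prod.fst).toFinset) ≤ (h.map Prod.fst).length := List.toFinset_card_le _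
      _ < n.choose 2 := by rwa [List.length_map]
      _ = #{e : Sym2 (Fin n) | ¬ e.IsDiag} := by
        rw [← Fintype.card_subtype, Sym2.card_subtype_not_diag, Fintype.card_fin]
  obtain ⟨e, he, hfresh⟩ := exists_mem_notMem_of_card_lt_card hcard
  exact ⟨e, (mem_filter.1 he).2, fun hmem => hfresh (List.mem_toFinset.2 hmem)⟩

/-- After a win Builder keeps moving, and this is where unplayed edges must remain. -/
lemma ForcesWin.exists_move (hw : ForcesWin r (m + 1) h) (hl : h.length < n.choose 2) :
    ∃ e, IsLegalMove h e ∧ ∀ c, ForcesWin r m (h ++ [(e, c)]) := by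
  cases hw with
  | done hh =>
    obtain ⟨e, he⟩ := exists_isLegalMove hl
    exact ⟨e, he, fun c => .done (hh.append _)⟩
  | move e he hwin => exact ⟨e, he, hwin⟩

lemma length_gamePlay (B : BuilderStrategy n t) (P : PainterStrategy n t) (j : ℕ) :
    (gamePlay B P j).length = j := by
  induction j with
  | zero => rfl
  | succ j ih => simp [gamePlay, ih]

lemma ForcesWin.builderWinsIn [NeZero n] {k : ℕ} (hw : ForcesWin r k ([] : GameHistory n t))
    (hk : k ≤ n.choose 2) : BuilderWinsIn n t r k := by
  have winning_move : ∀ h : GameHistory n t, ∃ e, ∀ m, h.length + (m + 1) = k →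
      ForcesWin r (m + 1) h → IsLegalMove h e ∧ ∀ c, ForcesWin r m (h ++ [(e, c)]) := by
    intro h
    by_cases hh : ∃ m, h.length + (m + 1) = k ∧ ForcesWin r (m + 1) h
    · obtain ⟨m, hm, hw⟩ := hh
      obtain ⟨e, he⟩ := hw.exists_move (by omega)
      refine ⟨e, fun m' hm' _ => ?_⟩
      obtain rfl : m' = m := by omega
      exact he
    · exact ⟨s(0, 0), fun m hm hw => absurd ⟨m, hm, hw⟩ hh⟩
  choose B hB using winning_move
  have forcesWin_gamePlay : ∀ P j m, j + m = k → ForcesWin r m (gamePlay B P j) := by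
    intro P j
    induction j with
    | zero =>
      intro m hm
      obtain rfl : m = k := by omega
      exact hw
    | succ j ih =>
      intro m hm
      exact (hB _ m (by rw [length_gamePlay]; omega) (ih (m + 1) (by omega))).2 _
  refine ⟨B, fun P j hj => ?_, fun P => (forcesWin_gamePlay P k 0 rfl).historyHasMatching⟩
  obtain ⟨m, rfl⟩ := Nat.exists_eq_add_of_lt hj
  exact (hB _ m (by rw [length_gamePlay]; omega) (forcesWin_gamePlay P j _ (by omega))).1

end Game

section Matching

variable {n t : ℕ} {h : GameHistory n t} {i : Fin t} {V W : Finset (Fin n)}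

lemma IsMatchingIn.eq_of_mem {M : Finset (Sym2 (Fin n))} (hM : IsMatchingIn M)
    {e f : Sym2 (Fin n)} (he : e ∈ M) (hf : f ∈ M) {v : Fin n} (hve : v ∈ e) (hvf : v ∈ f) :
    e = f := by
  by_contra hne
  exact hM.2 he hf hne v hve hvf

lemma IsMatchingIn.mono {M N : Finset (Sym2 (Fin n))} (hM : IsMatchingIn M) (hNM : N ⊆ M) :
    IsMatchingIn N :=
  ⟨fun e he => hM.1 e (hNM he), hM.2.mono (coe_subset.2 hNM)⟩

lemma isMatchingIn_empty : IsMatchingIn (∅ : Finset (Sym2 (Fin n))) :=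
  ⟨by simp, by simp⟩

lemma IsMatchingIn.union {M N : Finset (Sym2 (Fin n))} (hM : IsMatchingIn M)
    (hN : IsMatchingIn N) (hMN : ∀ e ∈ M, ∀ f ∈ N, EdgeDisjoint e f) : IsMatchingIn (M ∪ N) := by
  constructor
  · intro e he
    exact (mem_union.1 he).elim (hM.1 e) (hN.1 e)
  · rw [coe_union, Set.pairwise_union]
    exact ⟨hM.2, hN.2, fun e he f hf _ =>
      ⟨hMN e he f hf, fun v hvf hve => hMN e he f hf v hve hvf⟩⟩

lemma isMatchingIn_singleton {e : Sym2 (Fin n)} (he : ¬ e.IsDiag) :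
    IsMatchingIn ({e} : Finset (Sym2 (Fin n))) :=
  ⟨by simpa using he, by simp⟩

lemma edgeDisjoint_of_mem_sym2 {e f : Sym2 (Fin n)} (he : e ∈ V.sym2) (hf : f ∈ W.sym2)
    (hVW : Disjoint V W) : EdgeDisjoint e f := fun v hve hvf =>
  disjoint_left.1 hVW (mem_sym2_iff.1 he v hve) (mem_sym2_iff.1 hf v hvf)

/-- The vertices of `V` that lie on no edge of `M`. -/
def uncoveredVertices {α : Type*} [DecidableEq α] (V : Finset α) (M : Finset (Sym2 α)) :
    Finset α :=
  {v ∈ V | ∀ e ∈ M, v ∉ e}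

lemma mem_uncoveredVertices {α : Type*} [DecidableEq α] {V : Finset α} {M : Finset (Sym2 α)}
    {v : α} : v ∈ uncoveredVertices V M ↔ v ∈ V ∧ ∀ e ∈ M, v ∉ e := mem_filter

lemma card_le_card_uncoveredVertices_add {α : Type*} [DecidableEq α] (V : Finset α)
    (M : Finset (Sym2 α)) : #V ≤ #(uncoveredVertices V M) + #M * 2 := by
  have hcover : V ⊆ uncoveredVertices V M ∪ M.biUnion Sym2.toFinset := by
    intro v hv
    simp only [mem_union, mem_uncoveredVertices, mem_biUnion, Sym2.mem_toFinset]
    grind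
  have htwo : ∀ e ∈ M, #e.toFinset ≤ 2 := by
    intro e _
    rw [Sym2.card_toFinset]
    split <;> omega
  exact (card_le_card hcover).trans <| (card_union_le _ _).trans <|
    Nat.add_le_add_left (card_biUnion_le_card_mul _ _ _ htwo) _

/-- The history `h` contains a matching of `k` edges of colour `i` with all ends in `W`. -/
def HasColourMatching (h : GameHistory n t) (i : Fin t) (W : Finset (Fin n)) (k : ℕ) : Prop :=
  ∃ M ⊆ W.sym2, #M = k ∧ IsMatchingIn M ∧ ∀ e ∈ M, (e, i) ∈ h

lemma HasColourMatching.historyHasMatching {r : Fin t → ℕ}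
    (hM : HasColourMatching h i W (r i)) : HistoryHasMatching n t r h := by
  obtain ⟨M, -, hM⟩ := hM
  exact ⟨i, M, hM⟩

lemma hasColourMatching_zero (h : GameHistory n t) (i : Fin t) (W : Finset (Fin n)) :
    HasColourMatching h i W 0 :=
  ⟨∅, empty_subset _, card_empty, isMatchingIn_empty, by simp⟩

lemma hasColourMatching_one {x y : Fin n} (hxy : x ≠ y) (hx : x ∈ W) (hy : y ∈ W)
    (hmem : (s(x, y), i) ∈ h) : HasColourMatching h i W 1 :=
  ⟨{s(x, y)}, by simp [hx, hy], card_singleton _, isMatchingIn_singleton (by simpa using hxy),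
    by simpa using hmem⟩

lemma HasColourMatching.append {k : ℕ} (hM : HasColourMatching h i W k) (l : GameHistory n t) :
    HasColourMatching (h ++ l) i W k := by
  obtain ⟨M, hMW, hcard, hM, hmem⟩ := hM
  exact ⟨M, hMW, hcard, hM, fun e he => List.mem_append_left _ (hmem e he)⟩

lemma HasColourMatching.union {k l : ℕ} (hV : HasColourMatching h i V k)
    (hW : HasColourMatching h i W l) (hVW : Disjoint V W) :
    HasColourMatching h i (V ∪ W) (k + l) := by
  obtain ⟨M, hMV, rfl, hM, hMh⟩ := hV
  obtain ⟨N, hNW, rfl, hN, hNh⟩ := hW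
  have hMN : ∀ e ∈ M, ∀ f ∈ N, EdgeDisjoint e f := fun e he f hf =>
    edgeDisjoint_of_mem_sym2 (hMV he) (hNW hf) hVW
  refine ⟨M ∪ N, ?_, card_union_of_disjoint ?_, hM.union hN hMN, fun e he => ?_⟩
  · exact union_subset (hMV.trans (sym2_mono subset_union_left))
      (hNW.trans (sym2_mono subset_union_right))
  · exact disjoint_left.2 fun e he he' =>
      hMN e he e he' _ e.out_fst_mem e.out_fst_mem
  · exact (mem_union.1 he).elim (hMh e) (hNh e)

/-- The edges with both ends in `V` that were played in the history `h`. -/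
def playedEdges (h : GameHistory n t) (V : Finset (Fin n)) : Finset (Sym2 (Fin n)) :=
  {e ∈ V.sym2 | e ∈ h.map Prod.fst}

/-- The edges with both ends in `V` that received the colour `i` in the history `h`. -/
def colourClass (h : GameHistory n t) (V : Finset (Fin n)) (i : Fin t) :
    Finset (Sym2 (Fin n)) :=
  {e ∈ V.sym2 | (e, i) ∈ h}

lemma mem_playedEdges {e : Sym2 (Fin n)} :
    e ∈ playedEdges h V ↔ e ∈ V.sym2 ∧ e ∈ h.map Prod.fst := mem_filter

lemma mem_colourClass {e : Sym2 (Fin n)} :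
    e ∈ colourClass h V i ↔ e ∈ V.sym2 ∧ (e, i) ∈ h := mem_filter

lemma colourClass_subset_playedEdges (h : GameHistory n t) (V : Finset (Fin n)) (i : Fin t) :
    colourClass h V i ⊆ playedEdges h V := fun _ he =>
  mem_playedEdges.2 ⟨(mem_colourClass.1 he).1, List.mem_map_of_mem (mem_colourClass.1 he).2⟩

lemma card_playedEdges_le_sum (h : GameHistory n t) (V : Finset (Fin n)) :
    #(playedEdges h V) ≤ ∑ i, #(colourClass h V i) := by
  refine (card_le_card fun e he => ?_).trans card_biUnion_le
  obtain ⟨heV, hplayed⟩ := mem_playedEdges.1 he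
  obtain ⟨⟨_, i⟩, hmem, rfl⟩ := List.mem_map.1 hplayed
  exact mem_biUnion.2 ⟨i, mem_univ i, mem_colourClass.2 ⟨heV, hmem⟩⟩

lemma card_playedEdges_le {k : ℕ} (hk : ∀ j, #(colourClass h V j) ≤ k) (i : Fin t) :
    #(playedEdges h V) ≤ #(colourClass h V i) + (t - 1) * k := by
  calc #(playedEdges h V) ≤ ∑ j, #(colourClass h V j) := card_playedEdges_le_sum h V
    _ = #(colourClass h V i) + ∑ j ∈ univ.erase i, #(colourClass h V j) :=
      (add_sum_erase _ _ (mem_univ i)).symm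
    _ ≤ #(colourClass h V i) + #(univ.erase i) • k :=
      Nat.add_le_add_left (sum_le_card_nsmul _ _ _ fun j _ => hk j) _
    _ = #(colourClass h V i) + (t - 1) * k := by
      rw [card_erase_of_mem (mem_univ i), card_univ, Fintype.card_fin, smul_eq_mul]

lemma hasColourMatching_of_le_card_colourClass (hM : IsMatchingIn (playedEdges h V)) {k : ℕ}
    (hk : k ≤ #(colourClass h V i)) : HasColourMatching h i V k := by
  obtain ⟨N, hN, hcard⟩ := exists_subset_card_eq hk
  exact ⟨N, hN.trans (filter_subset _ _), hcard,
    hM.mono (hN.trans (colourClass_subset_playedEdges h V i)),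
    fun e he => (mem_colourClass.1 (hN he)).2⟩

lemma playedEdges_append_eq_insert {e : Sym2 (Fin n)} (he : e ∈ V.sym2) (c : Fin t) :
    playedEdges (h ++ [(e, c)]) V = insert e (playedEdges h V) := by
  ext f
  simp only [mem_playedEdges, mem_insert, List.map_append, List.mem_append, List.map_cons,
    List.map_nil, List.mem_singleton]
  grind

lemma playedEdges_append_sdiff {l : GameHistory n t} {R : Finset (Fin n)}
    (hl : ∀ e ∈ l.map Prod.fst, e ∉ (V \ R).sym2) :
    playedEdges (h ++ l) (V \ R) = {e ∈ playedEdges h V | e ∈ (V \ R).sym2} := by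
  have hsub : (V \ R).sym2 ⊆ V.sym2 := sym2_mono sdiff_subset
  ext e
  simp only [mem_playedEdges, mem_filter, List.map_append, List.mem_append]
  grind

lemma isLegalMove_of_mem_uncoveredVertices {u v : Fin n} (huv : u ≠ v)
    (hu : u ∈ uncoveredVertices V (playedEdges h V)) (hv : v ∈ V) : IsLegalMove h s(u, v) := by
  obtain ⟨huV, huncov⟩ := mem_uncoveredVertices.1 hu
  exact ⟨by simpa using huv, fun hplayed =>
    huncov _ (mem_playedEdges.2 ⟨by simp [huV, hv], hplayed⟩) (Sym2.mem_mk_left u v)⟩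

lemma nodup_map_fst_append {e : Sym2 (Fin n)} (hh : (h.map Prod.fst).Nodup)
    (he : IsLegalMove h e) (c : Fin t) : ((h ++ [(e, c)]).map Prod.fst).Nodup := by
  rw [List.map_append]
  exact hh.append (List.nodup_singleton e) (List.disjoint_singleton.2 he.2)

end Matching

section Position

variable {n r s m : ℕ} {h : GameHistory n 3} {V : Finset (Fin n)}

/-- The invariant of Builder's strategy for three colours, with `m` moves left: `V` is the active
set of `4 * s - 2` vertices, inside which the played edges form a matching and outside which every
colour has a matching of `r - s` edges. -/
structure BuilderPosition (r s m : ℕ) (h : GameHistory n 3) (V : Finset (Fin n)) : Prop where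
  nodup : (h.map Prod.fst).Nodup
  le : s ≤ r
  card : #V + 2 = 4 * s
  matching : IsMatchingIn (playedEdges h V)
  outside : ∀ i, HasColourMatching h i Vᶜ (r - s)
  budget : 5 * s ≤ m + #(playedEdges h V) + 4

lemma builderPosition_nil (hV : #V + 2 = 4 * r) :
    BuilderPosition r r (5 * r - 4) [] V where
  nodup := List.nodup_nil
  le := le_rfl
  card := hV
  matching := by simpa [playedEdges] using isMatchingIn_empty
  outside i := by
    rw [Nat.sub_self]
    exact hasColourMatching_zero _ _ _
  budget := by omega

lemma BuilderPosition.mono (pos : BuilderPosition r s m h V) {m' : ℕ} (hm : m ≤ m') :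
    BuilderPosition r s m' h V :=
  { pos with budget := by have := pos.budget; omega }

lemma BuilderPosition.historyHasMatching (pos : BuilderPosition r s m h V) {i : Fin 3}
    (hi : s ≤ #(colourClass h V i)) : HistoryHasMatching n 3 (fun _ => r) h := by
  have hunion := (pos.outside i).union (hasColourMatching_of_le_card_colourClass pos.matching hi)
    disjoint_compl_left
  rw [Nat.sub_add_cancel pos.le] at hunion
  exact hunion.historyHasMatching (r := fun _ => r)

lemma BuilderPosition.extend (pos : BuilderPosition r s (m + 1) h V) {u v : Fin n} (huv : u ≠ v)
    (hu : u ∈ uncoveredVertices V (playedEdges h V))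
    (hv : v ∈ uncoveredVertices V (playedEdges h V)) (c : Fin 3) :
    BuilderPosition r s m (h ++ [(s(u, v), c)]) V := by
  obtain ⟨huV, hu_uncov⟩ := mem_uncoveredVertices.1 hu
  obtain ⟨hvV, hv_uncov⟩ := mem_uncoveredVertices.1 hv
  have hlegal := isLegalMove_of_mem_uncoveredVertices huv hu hvV
  have hplayed : playedEdges (h ++ [(s(u, v), c)]) V = insert s(u, v) (playedEdges h V) :=
    playedEdges_append_eq_insert (by simp [huV, hvV]) c
  have hnew : s(u, v) ∉ playedEdges h V := fun hmem => hlegal.2 (mem_playedEdges.1 hmem).2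
  refine ⟨nodup_map_fst_append pos.nodup hlegal c, pos.le, pos.card, ?_,
    fun i => (pos.outside i).append _, ?_⟩
  · rw [hplayed, insert_eq]
    refine (isMatchingIn_singleton hlegal.1).union pos.matching fun e he f hf w hwe hwf => ?_
    rw [mem_singleton.1 he, Sym2.mem_iff] at hwe
    rcases hwe with rfl | rfl
    · exact hu_uncov f hf hwf
    · exact hv_uncov f hf hwf
  · rw [hplayed, card_insert_of_notMem hnew]
    have := pos.budget
    omega

lemma BuilderPosition.discard (pos : BuilderPosition r (s + 1) (m + 2) h V)
    {l : GameHistory n 3} {R : Finset (Fin n)} (hRV : R ⊆ V) (hR : #R = 4)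
    (hnodup : ((h ++ l).map Prod.fst).Nodup) (hl : ∀ e ∈ l.map Prod.fst, e ∉ (V \ R).sym2)
    (hlost : #{e ∈ playedEdges h V | e ∉ (V \ R).sym2} ≤ 3)
    (hcol : ∀ i, HasColourMatching (h ++ l) i R 1) :
    BuilderPosition r s m (h ++ l) (V \ R) := by
  have hplayed := playedEdges_append_sdiff (h := h) hl
  have hle := pos.le
  refine ⟨hnodup, by omega, ?_, ?_, fun i => ?_, ?_⟩
  · have hsdiff := card_sdiff_add_card_eq_card hRV
    have := pos.card
    omega
  · exact hplayed ▸ pos.matching.mono (filter_subset _ _)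
  · have hdisj : Disjoint Vᶜ R := disjoint_compl_left.mono_right hRV
    have hunion := ((pos.outside i).append l).union (hcol i) hdisj
    have hcompl : Vᶜ ∪ R = (V \ R)ᶜ := by
      ext
      simp [imp_iff_not_or]
    rwa [hcompl, show r - (s + 1) + 1 = r - s by omega] at hunion
  · have hsplit := card_filter_add_card_filter_not (s := playedEdges h V) (· ∈ (V \ R).sym2)
    have := pos.budget
    rw [hplayed]
    omega

/-- The vertices `p (i, 0)` and `p (i, 1)` are the ends of an edge of colour `i` in `V`; since `p`
is injective, these three edges are disjoint. -/
def IsRainbowMatching (h : GameHistory n 3) (V : Finset (Fin n)) (p : Fin 3 × Fin 2 ↪ Fin n) :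
    Prop :=
  ∀ i, s(p (i, 0), p (i, 1)) ∈ colourClass h V i

lemma exists_isRainbowMatching (hnodup : (h.map Prod.fst).Nodup)
    (hM : IsMatchingIn (playedEdges h V)) (hne : ∀ i, (colourClass h V i).Nonempty) :
    ∃ p, IsRainbowMatching h V p := by
  have ends : ∀ i, ∃ q : Fin 2 → Fin n, s(q 0, q 1) ∈ colourClass h V i := by
    intro i
    obtain ⟨⟨x, y⟩, he⟩ := hne i
    exact ⟨![x, y], he⟩
  choose q hq using ends
  have hplayed : ∀ i, s(q i 0, q i 1) ∈ playedEdges h V := fun i =>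
    colourClass_subset_playedEdges h V i (hq i)
  have hmem : ∀ i k, q i k ∈ s(q i 0, q i 1) := fun i k => by fin_cases k <;> simp
  refine ⟨⟨fun u => q u.1 u.2, ?_⟩, hq⟩
  rintro ⟨i, k⟩ ⟨j, l⟩ (heq : q i k = q j l)
  have hedge := hM.eq_of_mem (hplayed i) (hplayed j) (hmem i k) (heq ▸ hmem j l)
  obtain rfl : i = j := congrArg Prod.snd <| List.inj_on_of_nodup_map hnodup
    (mem_colourClass.1 (hq i)).2 (mem_colourClass.1 (hq j)).2 hedge
  have hdiag : q i 0 ≠ q i 1 := fun h01 => hM.1 _ (hplayed i) (by simp [h01])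
  fin_cases k <;> fin_cases l <;> simp_all

namespace IsRainbowMatching

variable {p : Fin 3 × Fin 2 ↪ Fin n}

lemma edge_mem_playedEdges (hp : IsRainbowMatching h V p) (i : Fin 3) :
    s(p (i, 0), p (i, 1)) ∈ playedEdges h V :=
  colourClass_subset_playedEdges h V i (hp i)

lemma mem_history (hp : IsRainbowMatching h V p) (i : Fin 3) :
    (s(p (i, 0), p (i, 1)), i) ∈ h :=
  (mem_colourClass.1 (hp i)).2

lemma mem_vertices (hp : IsRainbowMatching h V p) (u : Fin 3 × Fin 2) : p u ∈ V := by
  obtain ⟨h0, h1⟩ := mk_mem_sym2_iff.1 (mem_colourClass.1 (hp u.1)).1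
  obtain ⟨i, k⟩ := u
  fin_cases k
  exacts [h0, h1]

lemma card_not_mem_sym2_sdiff_le (hp : IsRainbowMatching h V p)
    (hM : IsMatchingIn (playedEdges h V)) (S : Finset (Fin 3 × Fin 2)) :
    #{e ∈ playedEdges h V | e ∉ (V \ S.map p).sym2} ≤ 3 := by
  have hsub : {e ∈ playedEdges h V | e ∉ (V \ S.map p).sym2} ⊆
      univ.image fun i => s(p (i, 0), p (i, 1)) := by
    intro e he
    obtain ⟨he, hmeets⟩ := mem_filter.1 he
    have heV := mem_sym2_iff.1 (mem_playedEdges.1 he).1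
    simp only [mem_sym2_iff, mem_sdiff, not_forall, not_and, not_not] at hmeets
    obtain ⟨v, hve, hvS⟩ := hmeets
    obtain ⟨⟨i, k⟩, -, rfl⟩ := mem_map.1 (hvS (heV v hve))
    refine mem_image.2 ⟨i, mem_univ i, hM.eq_of_mem (hp.edge_mem_playedEdges i) he ?_ hve⟩
    fin_cases k <;> simp
  exact (card_le_card hsub).trans card_image_le

lemma discard (hp : IsRainbowMatching h V p) (pos : BuilderPosition r (s + 1) (m + 2) h V)
    {l : GameHistory n 3} {S : Finset (Fin 3 × Fin 2)} (hS : #S = 4)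
    (hnodup : ((h ++ l).map Prod.fst).Nodup) (hl : ∀ e ∈ l.map Prod.fst, ∃ u ∈ S, p u ∈ e)
    (hcol : ∀ i, ∃ u ∈ S, ∃ v ∈ S, u ≠ v ∧ (s(p u, p v), i) ∈ h ++ l) :
    BuilderPosition r s m (h ++ l) (V \ S.map p) := by
  refine pos.discard ?_ (by rw [card_map, hS]) hnodup (fun e he hmem => ?_)
    (hp.card_not_mem_sym2_sdiff_le pos.matching S) fun i => ?_
  · intro v hv
    obtain ⟨u, -, rfl⟩ := mem_map.1 hv
    exact hp.mem_vertices u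
  · obtain ⟨u, hu, hue⟩ := hl e he
    exact (mem_sdiff.1 (mem_sym2_iff.1 hmem _ hue)).2 (mem_map_of_mem p hu)
  · obtain ⟨u, hu, v, hv, huv, hmem⟩ := hcol i
    exact hasColourMatching_one (p.injective.ne huv) (mem_map_of_mem p hu) (mem_map_of_mem p hv)
      hmem

lemma isLegalMove_cross (hp : IsRainbowMatching h V p) (hM : IsMatchingIn (playedEdges h V))
    {a b : Fin 3} (hab : a ≠ b) : IsLegalMove h s(p (a, 0), p (b, 0)) := by
  refine ⟨by simpa using hab, fun hplayed => ?_⟩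
  have hmem : s(p (a, 0), p (b, 0)) ∈ playedEdges h V :=
    mem_playedEdges.2 ⟨by simp [hp.mem_vertices], hplayed⟩
  have heq := hM.eq_of_mem hmem (hp.edge_mem_playedEdges a) (Sym2.mem_mk_left _ _)
    (Sym2.mem_mk_left _ _)
  have hb : p (b, 0) ∈ s(p (a, 0), p (a, 1)) := heq ▸ Sym2.mem_mk_right _ _
  simp [hab.symm] at hb

end IsRainbowMatching

lemma forall_fin_three_of_ne {P : Fin 3 → Prop} {a b c : Fin 3} (hab : a ≠ b) (hac : a ≠ c)
    (hbc : b ≠ c) (ha : P a) (hb : P b) (hc : P c) (i : Fin 3) : P i := by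
  have hi : i = a ∨ i = b ∨ i = c := by omega
  rcases hi with rfl | rfl | rfl <;> assumption

lemma IsRainbowMatching.forcesWin_of_cross {p : Fin 3 × Fin 2 ↪ Fin n}
    (hp : IsRainbowMatching h V p) (pos : BuilderPosition r (s + 1) (m + 2) h V)
    (hwin : ∀ h' (V' : Finset (Fin n)), BuilderPosition r s m h' V' → ForcesWin (fun _ => r) m h')
    {a b c : Fin 3} (hab : a ≠ b) (hac : a ≠ c) (hbc : b ≠ c) :
    ForcesWin (fun _ => r) (m + 1) (h ++ [(s(p (a, 0), p (b, 0)), a)]) := by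
  have hfst := hp.isLegalMove_cross pos.matching hab
  have hsnd : IsLegalMove (h ++ [(s(p (a, 0), p (b, 0)), a)]) s(p (b, 0), p (c, 0)) := by
    obtain ⟨hdiag, hfresh⟩ := hp.isLegalMove_cross pos.matching hbc
    refine ⟨hdiag, ?_⟩
    rw [List.map_append, List.mem_append, not_or]
    exact ⟨hfresh, by simp [hab.symm, hac.symm, hbc.symm]⟩
  refine .move _ hsnd fun d => ?_
  have hnodup := nodup_map_fst_append (nodup_map_fst_append pos.nodup hfst a) hsnd d
  rw [List.append_assoc] at hnodup ⊢
  have hb := hp.mem_history b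
  have hc := hp.mem_history c
  revert d
  refine forall_fin_three_of_ne hab hac hbc (fun hnodup => ?_) (fun hnodup => ?_) (fun hnodup => ?_)
  · refine hwin _ _ (hp.discard pos (S := {(b, 0), (b, 1), (c, 0), (c, 1)}) (by simp [hbc]) hnodup
      (by simp) (forall_fin_three_of_ne hab hac hbc ?_ ?_ ?_))
    · exact ⟨(b, 0), by simp, (c, 0), by simp, by simp [hbc], by simp⟩
    · exact ⟨(b, 0), by simp, (b, 1), by simp, by simp, by simp [hb]⟩
    · exact ⟨(c, 0), by simp, (c, 1), by simp, by simp, by simp [hc]⟩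
  · refine hwin _ _ (hp.discard pos (S := {(a, 0), (b, 0), (c, 0), (c, 1)})
      (by simp [hab, hac, hbc]) hnodup (by simp) (forall_fin_three_of_ne hab hac hbc ?_ ?_ ?_))
    · exact ⟨(a, 0), by simp, (b, 0), by simp, by simp [hab], by simp⟩
    · exact ⟨(b, 0), by simp, (c, 0), by simp, by simp [hbc], by simp⟩
    · exact ⟨(c, 0), by simp, (c, 1), by simp, by simp, by simp [hc]⟩
  · refine hwin _ _ (hp.discard pos (S := {(a, 0), (b, 0), (b, 1), (c, 0)})
      (by simp [hab, hac, hbc]) hnodup (by simp) (forall_fin_three_of_ne hab hac hbc ?_ ?_ ?_))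
    · exact ⟨(a, 0), by simp, (b, 0), by simp, by simp [hab], by simp⟩
    · exact ⟨(b, 0), by simp, (b, 1), by simp, by simp, by simp [hb]⟩
    · exact ⟨(b, 0), by simp, (c, 0), by simp, by simp [hbc], by simp⟩

lemma IsRainbowMatching.forcesWin {p : Fin 3 × Fin 2 ↪ Fin n}
    (hp : IsRainbowMatching h V p) (pos : BuilderPosition r (s + 1) (m + 2) h V)
    (hwin : ∀ m' ≤ m + 1, ∀ h' (V' : Finset (Fin n)),
      BuilderPosition r s m' h' V' → ForcesWin (fun _ => r) m' h') :
    ForcesWin (fun _ => r) (m + 2) h := by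
  have h01 : (0 : Fin 3) ≠ 1 := by decide
  have h02 : (0 : Fin 3) ≠ 2 := by decide
  have h12 : (1 : Fin 3) ≠ 2 := by decide
  have hlegal := hp.isLegalMove_cross pos.matching h01
  refine .move _ hlegal (forall_fin_three_of_ne h01 h02 h12 ?_ ?_ ?_)
  · exact hp.forcesWin_of_cross pos (hwin m (by omega)) h01 h02 h12
  · rw [Sym2.eq_swap]
    exact hp.forcesWin_of_cross pos (hwin m (by omega)) h01.symm h12 h02
  · refine hwin _ le_rfl _ _ (hp.discard (pos.mono (Nat.le_succ _))
      (S := {(0, 0), (0, 1), (1, 0), (1, 1)}) (by simp) (nodup_map_fst_append pos.nodup hlegal 2)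
      (by simp) (forall_fin_three_of_ne h01 h02 h12 ?_ ?_ ?_))
    · exact ⟨(0, 0), by simp, (0, 1), by simp, by simp, by simp [hp.mem_history 0]⟩
    · exact ⟨(1, 0), by simp, (1, 1), by simp, by simp, by simp [hp.mem_history 1]⟩
    · exact ⟨(0, 0), by simp, (1, 0), by simp, by simp, by simp⟩

lemma BuilderPosition.colourClass_nonempty (pos : BuilderPosition r s m h V)
    (huncov : #(uncoveredVertices V (playedEdges h V)) ≤ 1)
    (hclass : ∀ i, #(colourClass h V i) < s) (i : Fin 3) : (colourClass h V i).Nonempty := by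
  have hcover := card_le_card_uncoveredVertices_add V (playedEdges h V)
  have hplayed := card_playedEdges_le (fun j => Nat.le_sub_one_of_lt (hclass j)) i
  have hV := pos.card
  rw [← card_pos]
  omega

theorem BuilderPosition.forcesWin (pos : BuilderPosition r s m h V) :
    ForcesWin (fun _ => r) m h := by
  induction m using Nat.strong_induction_on generalizing s h V with
  | _ m ih =>
  by_cases hclass : ∃ i, s ≤ #(colourClass h V i)
  · obtain ⟨i, hi⟩ := hclass
    exact .done (pos.historyHasMatching hi)
  push Not at hclass
  have hbudget := pos.budget
  have hplayed := card_playedEdges_le (fun j => Nat.le_sub_one_of_lt (hclass j)) 0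
  have hclass_zero := hclass 0
  by_cases huncov : 1 < #(uncoveredVertices V (playedEdges h V))
  · obtain ⟨u, hu, v, hv, huv⟩ := one_lt_card.1 huncov
    have hlegal := isLegalMove_of_mem_uncoveredVertices huv hu (mem_uncoveredVertices.1 hv).1
    obtain ⟨m, rfl⟩ := Nat.exists_eq_add_of_le' (show 1 ≤ m by omega)
    exact .move _ hlegal fun c => ih m (by omega) (pos.extend huv hu hv c)
  · have hne := pos.colourClass_nonempty (not_lt.1 huncov) hclass
    obtain ⟨p, hp⟩ := exists_isRainbowMatching pos.nodup pos.matching hne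
    have hcard := card_le_card_uncoveredVertices_add V (playedEdges h V)
    have hV := pos.card
    obtain ⟨s, rfl⟩ := Nat.exists_eq_add_of_le' (show 1 ≤ s by omega)
    obtain ⟨m, rfl⟩ := Nat.exists_eq_add_of_le' (show 2 ≤ m by omega)
    exact hp.forcesWin pos fun m' hm' _ _ => ih m' (by omega)

end Position

lemma five_mul_sub_four_le_choose_two {n r : ℕ} (hr : 1 ≤ r) (hn : 4 * r - 2 ≤ n) :
    5 * r - 4 ≤ n.choose 2 := by
  refine le_trans ?_ (Nat.choose_le_choose 2 hn)
  obtain ⟨k, rfl⟩ := Nat.exists_eq_add_of_le' hr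
  rw [show 4 * (k + 1) - 2 = 4 * k + 1 + 1 by omega, Nat.choose_two_right,
    Nat.le_div_iff_mul_le two_pos, Nat.add_sub_cancel]
  rw [show 5 * (k + 1) - 4 = 5 * k + 1 by omega]
  nlinarith

theorem restrictedOnlineRamsey_three_colours_upper_general {n r : ℕ} (hr : 1 ≤ r)
    (hn : 4 * r - 2 ≤ n) : BuilderWinsIn n 3 (fun _ => r) (5 * r - 4) := by
  have : NeZero n := ⟨by omega⟩
  have hle : 4 * r - 2 ≤ #(univ : Finset (Fin n)) := by rwa [card_univ, Fintype.card_fin]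
  obtain ⟨V, -, hV⟩ := exists_subset_card_eq hle
  have pos : BuilderPosition r r (5 * r - 4) [] V := builderPosition_nil (by omega)
  exact pos.forcesWin.builderWinsIn (five_mul_sub_four_le_choose_two hr hn)

/-- For `r ≥ 1`, `R̃₃(rK₂; 4r − 2) ≤ 5r − 4`. -/
theorem restrictedOnlineRamsey_three_colours_upper (r : ℕ) (hr : 1 ≤ r) :
    restrictedOnlineRamsey (4 * r - 2) 3 (fun _ => r) ≤ 5 * r - 4 :=
  Nat.sInf_le (restrictedOnlineRamsey_three_colours_upper_general hr le_rfl)
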